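/- Let a ≥ 1, b, e be natural numbers, let m ≡_k A_a b, and let w = A_{a−1} e. Then w ≡_k A_{a−1} e (i.e., w is in k-normal form as written) provided that either (1) A_{a−1}(⟨m⟩₋₁) ≤ w < A_a(⟨m⟩₋₁), or (2) A_{a−1} m ≤ w < A_a(b+1). -/

import Mathlib

/-- The base-`k` Ackermann function `A_a(k, b)`:
`A_0(k, b) = k ^ b` and `A_{a+1}(k, b) = A_a^k(k, A_{a+1}(k, b-1))`,
with the auxiliary value `A_{a+1}(k, -1) = 1`
(equivalently, `A_{a+1}(k, b) = (A_a^k)^[b+1] (1)`). -/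
def Ack (k : ℕ) : ℕ → ℕ → ℕ
  | 0, b => k ^ b
  | a + 1, b => ((Ack k a)^[k])^[b + 1] 1

/-- `IsSandwich k m n a b ms` says that `(A_{a i}(k, b i))_{i=1}^n` is a
`k`-sandwiching sequence for `m`, with sandwiching values `(ms i)_{i=0}^n`:
`ms 0 = 0`; for each `i < n`, `A_{a (i+1)} (ms i) ≤ m < A_{a (i+1) + 1} (ms i)`,
`A_{a (i+1)} (b (i+1)) ≤ m < A_{a (i+1)} (b (i+1) + 1)`, and
`ms (i+1) = A_{a (i+1)} (b (i+1))`; and `A_0 (ms n) > m`. -/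
structure IsSandwich (k m n : ℕ) (a b ms : ℕ → ℕ) : Prop where
  ms_zero : ms 0 = 0
  idx_lo : ∀ i < n, Ack k (a (i + 1)) (ms i) ≤ m
  idx_hi : ∀ i < n, m < Ack k (a (i + 1) + 1) (ms i)
  arg_lo : ∀ i < n, Ack k (a (i + 1)) (b (i + 1)) ≤ m
  arg_hi : ∀ i < n, m < Ack k (a (i + 1)) (b (i + 1) + 1)
  ms_succ : ∀ i < n, ms (i + 1) = Ack k (a (i + 1)) (b (i + 1))
  halt : m < Ack k 0 (ms n)

/-- `NF k m a b c` says that `m ≡_k A_a b + c`, i.e. `m` has `k`-normal form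
`A_a b + c` (so `m = A_a b + c` and the `k`-sandwiching sequence of `m` ends
with the pair `(a, b)`). -/
def NF (k m a b c : ℕ) : Prop :=
  m = Ack k a b + c ∧
    ∃ n as bs ms, 1 ≤ n ∧ IsSandwich k m n as bs ms ∧ a = as n ∧ b = bs n

theorem lt_iter {f : ℕ → ℕ} (hf : ∀ x, x < f x) (j : ℕ) (x : ℕ) : x + j ≤ f^[j] x := by
  induction j with
  | zero => simp
  | succ j ih =>
    rw [Function.iterate_succ_apply']
    have := hf (f^[j] x)
    omega

theorem Ack_succ (k a b : ℕ) : Ack k (a+1) b = ((Ack k a)^[k])^[b + 1] 1 := by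
  simp only [Ack]

theorem Ack_basic (k : ℕ) (hk : 2 ≤ k) (a : ℕ) :
    StrictMono (Ack k a) ∧ ∀ x, x < Ack k a x := by
  induction a with
  | zero =>
    refine ⟨fun x y h => ?_, fun x => ?_⟩
    · simp only [Ack]; exact Nat.pow_lt_pow_right hk h
    · simp only [Ack]; exact Nat.lt_pow_self hk
  | succ a ih =>
    have hF : ∀ x, x < (Ack k a)^[k] x := fun x => by
      have := lt_iter ih.2 k x
      omega
    refine ⟨strictMono_nat_of_lt_succ fun x => ?_, fun x => ?_⟩
    · rw [Ack_succ, Ack_succ, Function.iterate_succ_apply' _ (x+1)]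
      exact hF _
    · rw [Ack_succ]
      have := lt_iter hF (x+1) 1
      omega

theorem Ack_range_succ (k : ℕ) (hk : 2 ≤ k) (a x : ℕ) :
    ∃ y, x ≤ y ∧ Ack k (a+1) x = Ack k a y := by
  have h2 := (Ack_basic k hk a).2
  have hF : ∀ x, x < (Ack k a)^[k] x := fun x => by
    have := lt_iter h2 k x
    omega
  obtain ⟨j, rfl⟩ : ∃ j, k = j + 1 := ⟨k - 1, by omega⟩
  refine ⟨(Ack (j+1) a)^[j] (((Ack (j+1) a)^[j+1])^[x] 1), ?_, ?_⟩
  · have := lt_iter hF x 1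
    have := lt_iter h2 j (((Ack (j+1) a)^[j+1])^[x] 1)
    omega
  · rw [Ack_succ, Function.iterate_succ_apply', Function.iterate_succ_apply']

theorem Ack_range (k : ℕ) (hk : 2 ≤ k) (a c x : ℕ) (h : a ≤ c) :
    ∃ y, x ≤ y ∧ Ack k c x = Ack k a y := by
  induction c, h using Nat.le_induction generalizing x with
  | base => exact ⟨x, le_rfl, rfl⟩
  | succ c _ ih =>
    obtain ⟨y, hy, e⟩ := Ack_range_succ k hk c x
    obtain ⟨z, hz, e'⟩ := ih y
    exact ⟨z, hy.trans hz, e.trans e'⟩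

theorem Ack_jump (k : ℕ) (hk : 2 ≤ k) (a b c x : ℕ) (h : a ≤ c) (hlt : Ack k a b < Ack k c x) :
    Ack k a (b+1) ≤ Ack k c x := by
  obtain ⟨y, -, e⟩ := Ack_range k hk a c x h
  rw [e] at hlt ⊢
  exact (Ack_basic k hk a).1.monotone ((Ack_basic k hk a).1.lt_iff_lt.1 hlt)

theorem NF_extend (k N α e : ℕ) (a b ms : ℕ → ℕ) (hk : 2 ≤ k) (h0 : ms 0 = 0)
    (h : ∀ i < N, Ack k (a (i + 1)) (ms i) ≤ Ack k α e ∧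
      Ack k α e < Ack k (a (i + 1) + 1) (ms i) ∧
      Ack k (a (i + 1)) (b (i + 1)) ≤ Ack k α e ∧
      Ack k α e < Ack k (a (i + 1)) (b (i + 1) + 1) ∧
      ms (i + 1) = Ack k (a (i + 1)) (b (i + 1)))
    (hlo : Ack k α (ms N) ≤ Ack k α e) (hhi : Ack k α e < Ack k (α + 1) (ms N)) :
    NF k (Ack k α e) α e 0 := by
  have key : ∀ i < N + 1, (i < N ∧ i ≠ N) ∨ i = N := fun i hi => by omega
  have hne : ∀ i < N + 1, i ≠ N + 1 := fun i hi => by omega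
  refine ⟨rfl, N + 1, Function.update a (N+1) α, Function.update b (N+1) e,
    Function.update ms (N+1) (Ack k α e), by omega, ⟨?_, ?_, ?_, ?_, ?_, ?_, ?_⟩, by simp, by simp⟩
  · simpa using h0
  · intro i hi
    rcases key i hi with ⟨hi', hi''⟩ | rfl
    · simpa [hi'', hne i hi] using (h i hi').1
    · simpa using hlo
  · intro i hi
    rcases key i hi with ⟨hi', hi''⟩ | rfl
    · simpa [hi'', hne i hi] using (h i hi').2.1
    · simpa using hhi
  · intro i hi
    rcases key i hi with ⟨hi', hi''⟩ | rfl
    · simpa [hi'', hne i hi] using (h i hi').2.2.1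
    · simp
  · intro i hi
    rcases key i hi with ⟨hi', hi''⟩ | rfl
    · simpa [hi'', hne i hi] using (h i hi').2.2.2.1
    · simpa using (Ack_basic k hk α).1 (Nat.lt_succ_self e)
  · intro i hi
    rcases key i hi with ⟨hi', hi''⟩ | rfl
    · simpa [hi'', hne i hi] using (h i hi').2.2.2.2
    · simp
  · simpa using (Ack_basic k hk 0).2 _

theorem sandwich_le (k m n : ℕ) (a b ms : ℕ → ℕ) (hk : 2 ≤ k) (hs : IsSandwich k m n a b ms) :
    ∀ i < n, ms i ≤ b (i+1) := fun i hi => by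
  have h := (hs.idx_lo i hi).trans_lt (hs.arg_hi i hi)
  have := (Ack_basic k hk _).1.lt_iff_lt.1 h
  omega

theorem sandwich_mono (k m n : ℕ) (a b ms : ℕ → ℕ) (hk : 2 ≤ k) (hs : IsSandwich k m n a b ms)
    (i j : ℕ) (hij : i ≤ j) (hj : j ≤ n) : ms i ≤ ms j := by
  induction j, hij using Nat.le_induction with
  | base => exact le_rfl
  | succ j _ ih =>
    have h1 := ih (by omega)
    have h2 := sandwich_le k m n a b ms hk hs j (by omega)
    have h3 := (Ack_basic k hk (a (j+1))).2 (b (j+1))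
    rw [hs.ms_succ j (by omega)]
    omega

theorem stmt_5 (k n m a b e : ℕ) (aseq bseq ms : ℕ → ℕ) (hk : 2 ≤ k) (ha : 1 ≤ a)
    (hn : 1 ≤ n) (hs : IsSandwich k m n aseq bseq ms) (hm : m = Ack k a b)
    (han : a = aseq n) (hbn : b = bseq n)
    (hcond :
      (Ack k (a - 1) (ms (n - 1)) ≤ Ack k (a - 1) e ∧
        Ack k (a - 1) e < Ack k a (ms (n - 1))) ∨
      (Ack k (a - 1) m ≤ Ack k (a - 1) e ∧ Ack k (a - 1) e < Ack k a (b + 1))) :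
    NF k (Ack k (a - 1) e) (a - 1) e 0 := by
  obtain ⟨N, rfl⟩ : ∃ N, n = N + 1 := ⟨n - 1, by omega⟩
  obtain ⟨α, rfl⟩ : ∃ α, a = α + 1 := ⟨a - 1, by omega⟩
  simp only [Nat.add_sub_cancel] at hcond ⊢
  have hlo : Ack k (α+1) (ms N) ≤ m := by
    have := hs.idx_lo N (by omega)
    rwa [← han] at this
  rcases hcond with ⟨h1, h2⟩ | ⟨h1, h2⟩
  · refine NF_extend k N α e aseq bseq ms hk hs.ms_zero (fun i hi => ?_) h1 h2
    have hi' : i < N + 1 := by omega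
    have e1 := hs.ms_succ i hi'
    have e2 := sandwich_mono k m (N+1) aseq bseq ms hk hs (i+1) N (by omega) (by omega)
    have e3 := (Ack_basic k hk α).2 (ms N)
    have e4 := (Ack_basic k hk (aseq (i+1))).1.monotone
      (sandwich_le k m (N+1) aseq bseq ms hk hs i hi')
    have e5 := hs.idx_hi i hi'
    have e6 := hs.arg_hi i hi'
    refine ⟨?_, ?_, ?_, ?_, e1⟩ <;> omega
  · have hmn : ms (N+1) = m := by
      rw [hs.ms_succ N (by omega), ← han, ← hbn, ← hm]
    have hbm : b + 1 ≤ m := by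
      have := (Ack_basic k hk (α+1)).2 b
      omega
    refine NF_extend k (N+1) α e aseq bseq ms hk hs.ms_zero (fun i hi => ?_) (by rwa [hmn]) ?_
    · have hidx : α + 1 ≤ aseq (i+1) := by
        by_contra hc
        have e5 := hs.idx_hi i hi
        obtain ⟨y, hy, ey⟩ := Ack_range k hk (aseq (i+1) + 1) (α+1) (ms i) (by omega)
        have f1 := (Ack_basic k hk (aseq (i+1) + 1)).1.monotone hy
        have f2 := (Ack_basic k hk (α+1)).1.monotone
          (sandwich_mono k m (N+1) aseq bseq ms hk hs i N (by omega) (by omega))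
        omega
      have e1 := hs.idx_lo i hi
      have e2 := hs.arg_lo i hi
      have e3 := (Ack_basic k hk α).2 m
      have e5 := Ack_jump k hk (α+1) b _ _ (by omega) (hm ▸ hs.idx_hi i hi)
      have e6 := Ack_jump k hk (α+1) b _ _ hidx (hm ▸ hs.arg_hi i hi)
      refine ⟨?_, ?_, ?_, ?_, hs.ms_succ i hi⟩ <;> omega
    · rw [hmn]
      exact h2.trans_le ((Ack_basic k hk (α+1)).1.monotone hbm)
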